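/- arXiv:2212.08289 — 3 statements merged into one kernel-verified Lean document; each statement's English description precedes it below -/
import Mathlib

section
/- Let μ > 0 and let p : [0,∞) → ℝ^ℕ be a solution of the mean-field ODE system d/dt p_n(t) = 𝓛[p(t)]_n with p(t) ∈ V_μ for all t ≥ 0. Assume that the series E[p(t) − p*] = ∑_{n≥0} (p_n(t) − p*_n)²/p*_n together with its first and second termwise-differentiated series in t converge uniformly on compact subsets of [0,∞), so that t ↦ E[p(t) − p*] is twice differentiable with derivatives given termwise. Then for every t ≥ 0, d²/dt² E[p(t) − p*] ≥ −2·(d/dt E[p(t) − p*]). -/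
open Filter

/-- The poor-biased generator: `𝓛[p]_0 = p_1 - μ p_0` and, for `n ≥ 1`,
`𝓛[p]_n = (n+1) p_{n+1} + μ p_{n-1} - (n+μ) p_n`. -/
noncomputable def gen (μ : ℝ) (p : ℕ → ℝ) : ℕ → ℝ
  | 0 => p 1 - μ * p 0
  | n + 1 => ((n : ℝ) + 2) * p (n + 2) + μ * p n - (((n : ℝ) + 1) + μ) * p (n + 1)

/-- `V_μ`: probability mass functions on `ℕ` with mean `μ`. -/
def memV (μ : ℝ) (p : ℕ → ℝ) : Prop :=
  (∀ n, 0 ≤ p n) ∧ (∑' n : ℕ, p n = 1) ∧ (∑' n : ℕ, (n : ℝ) * p n = μ)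

/-- The Poisson distribution with mean `μ`: `p*_n = μ^n e^{-μ} / n!`. -/
noncomputable def pstar (μ : ℝ) (n : ℕ) : ℝ := μ ^ n * Real.exp (-μ) / n.factorial

/-- The series `∑_n f n t` converges uniformly on compact subsets of `[0, ∞)`. -/
def UnifConvOnCompacts (f : ℕ → ℝ → ℝ) : Prop :=
  ∀ K : Set ℝ, K ⊆ Set.Ici 0 → IsCompact K →
    TendstoUniformlyOn (fun (m : ℕ) (t : ℝ) => ∑ n ∈ Finset.range m, f n t)
      (fun t => ∑' n : ℕ, f n t) atTop K

lemma pstar_pos (μ : ℝ) (hμ : 0 < μ) (n : ℕ) : 0 < pstar μ n := by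
  unfold pstar; positivity

lemma pstar_succ (μ : ℝ) (n : ℕ) : ((n : ℝ) + 1) * pstar μ (n + 1) = μ * pstar μ n := by
  unfold pstar
  rw [Nat.factorial_succ]
  push_cast
  have : ((n : ℝ) + 1) ≠ 0 := by positivity
  field_simp
  ring

/-- generator acting on densities -/
noncomputable def dgen (μ : ℝ) (x : ℕ → ℝ) (n : ℕ) : ℝ :=
  μ * (x (n + 1) - x n) - n * (x n - x (n - 1))

lemma gen_div (μ : ℝ) (hμ : 0 < μ) (p : ℕ → ℝ) (n : ℕ) :
    gen μ p n / pstar μ n = dgen μ (fun k => p k / pstar μ k) n := by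
  cases n with
  | zero =>
    have h0 := pstar_pos μ hμ 0
    have h1 := pstar_pos μ hμ 1
    have e := pstar_succ μ 0
    simp only [Nat.cast_zero, zero_add, one_mul] at e
    simp only [gen, dgen, Nat.cast_zero, zero_mul, sub_zero, zero_add]
    rw [e]
    field_simp
  | succ n =>
    have h0 := pstar_pos μ hμ n
    have h1 := pstar_pos μ hμ (n + 1)
    have h2 := pstar_pos μ hμ (n + 2)
    have e := pstar_succ μ n
    have e' := pstar_succ μ (n + 1)
    simp only [gen, dgen, Nat.add_sub_cancel]
    have a0 : pstar μ n = ((n : ℝ) + 1) * pstar μ (n + 1) / μ := by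
      rw [e]; field_simp
    have a2 : pstar μ (n + 1 + 1) = μ * pstar μ (n + 1) / ((n : ℝ) + 2) := by
      rw [← e']; push_cast
      have : ((n : ℝ) + 2) ≠ 0 := by positivity
      field_simp
      ring
    rw [a0, a2]
    push_cast
    have : ((n : ℝ) + 2) ≠ 0 := by positivity
    have : ((n : ℝ) + 1) ≠ 0 := by positivity
    field_simp
    ring

lemma abel (μ : ℝ) (x : ℕ → ℝ) (m : ℕ) :
    ∑ n ∈ Finset.range (m + 1), pstar μ n * (x n * dgen μ x n) =
      -μ * (∑ n ∈ Finset.range m, pstar μ n * (x (n + 1) - x n) ^ 2)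
        + μ * pstar μ m * (x m * (x (m + 1) - x m)) := by
  induction m with
  | zero => simp [dgen]; ring
  | succ m ih =>
    rw [Finset.sum_range_succ, ih, Finset.sum_range_succ _ m]
    have e := pstar_succ μ m
    simp only [dgen, Nat.add_sub_cancel]
    push_cast
    linear_combination (-x (m + 1) * (x (m + 1) - x m)) * e

lemma no_harmonic (a : ℕ → ℝ) (ha : Summable a) (δ : ℝ) (hδ : 0 < δ)
    (h : ∀ᶠ m : ℕ in atTop, δ ≤ ((m : ℝ) + 1) * a (m + 1)) : False := by
  apply Real.not_summable_one_div_natCast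
  rw [← summable_nat_add_iff 1]
  have h1 : Summable (fun m => δ⁻¹ * a (m + 1)) :=
    ((summable_nat_add_iff 1).2 ha).mul_left _
  refine Summable.of_norm_bounded_eventually_nat h1 ?_
  filter_upwards [h] with m hm
  have : (0 : ℝ) < (m : ℝ) + 1 := by positivity
  rw [Real.norm_of_nonneg (by positivity)]
  push_cast
  rw [div_le_iff₀ this, inv_mul_eq_div, div_mul_eq_mul_div, le_div_iff₀ hδ]
  linarith

lemma bdry (μ : ℝ) (hμ : 0 < μ) (x : ℕ → ℝ) (m : ℕ) :
    μ * pstar μ m * (x m * (x (m + 1) - x m)) ≤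
      ((m : ℝ) + 1) * (pstar μ (m + 1) * x (m + 1) ^ 2) / 2 := by
  have e := pstar_succ μ m
  have h0 := pstar_pos μ hμ m
  rw [← mul_assoc ((m : ℝ) + 1), e]
  have : 0 ≤ μ * pstar μ m * ((x m - x (m + 1)) ^ 2 + x m ^ 2) := by positivity
  nlinarith

lemma first_order (μ : ℝ) (hμ : 0 < μ) (x : ℕ → ℝ) (L : ℝ)
    (hx : Summable (fun n => pstar μ n * x n ^ 2))
    (hS : Tendsto (fun m : ℕ => ∑ n ∈ Finset.range m, pstar μ n * (x n * dgen μ x n))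
      atTop (nhds L)) :
    HasSum (fun n => pstar μ n * (x (n + 1) - x n) ^ 2) (-L / μ) := by
  have hnn : ∀ n, 0 ≤ pstar μ n * (x (n + 1) - x n) ^ 2 := fun n =>
    mul_nonneg (pstar_pos μ hμ n).le (sq_nonneg _)
  have hS1 := (tendsto_add_atTop_iff_nat 1).2 hS
  simp only [abel] at hS1
  have hsum : Summable (fun n => pstar μ n * (x (n + 1) - x n) ^ 2) := by
    by_contra hc
    rw [not_summable_iff_tendsto_nat_atTop_of_nonneg hnn] at hc
    have h2 := hS1.add_atTop (hc.const_mul_atTop hμ)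
    refine no_harmonic _ hx 1 one_pos ?_
    filter_upwards [h2.eventually_ge_atTop 1] with m hm
    have := bdry μ hμ x m
    linarith
  have hB : Tendsto (fun m => μ * pstar μ m * (x m * (x (m + 1) - x m))) atTop (nhds 0) := by
    have h3 := (hx.tendsto_atTop_zero.add hsum.tendsto_atTop_zero).const_mul μ
    simp only [add_zero, mul_zero] at h3
    refine squeeze_zero_norm (fun m => ?_) h3
    have h0 : 0 < μ * pstar μ m := mul_pos hμ (pstar_pos μ hμ m)
    rw [Real.norm_eq_abs, abs_mul, abs_of_pos h0]
    have : |x m * (x (m + 1) - x m)| ≤ x m ^ 2 + (x (m + 1) - x m) ^ 2 := by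
      rw [abs_le]; constructor <;>
        nlinarith [sq_nonneg (x m + (x (m + 1) - x m)), sq_nonneg (x m - (x (m + 1) - x m)),
          sq_nonneg (x m), sq_nonneg (x (m + 1) - x m)]
    calc _ ≤ μ * pstar μ m * (x m ^ 2 + (x (m + 1) - x m) ^ 2) := by gcongr
      _ = _ := by ring
  have h4 := (hS1.sub hB).div_const (-μ)
  have h5 := tendsto_nhds_unique h4 (hsum.hasSum.tendsto_sum_nat.congr (fun m => by
    field_simp; ring))
  have : -L / μ = (L - 0) / -μ := by rw [sub_zero, div_neg, neg_div]
  rw [this, h5]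
  exact hsum.hasSum

lemma summable_of_tendsto (f : ℕ → ℝ) (hf : ∀ n, 0 ≤ f n) (L : ℝ)
    (h : Tendsto (fun m : ℕ => ∑ n ∈ Finset.range m, f n) atTop (nhds L)) : Summable f := by
  by_contra hc
  rw [not_summable_iff_tendsto_nat_atTop_of_nonneg hf] at hc
  exact not_tendsto_nhds_of_tendsto_atTop hc _ h

/-- decay of the gradient energy -/
lemma grad_decay (μ : ℝ) (hμ : 0 < μ) (d : ℝ → ℕ → ℝ) (a b : ℝ) (hab : a ≤ b)
    (hd : ∀ t ∈ Set.Icc a b, ∀ n, HasDerivAt (fun s => d s n) (dgen μ (d t) n - d t n) t)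
    (F : ℝ → ℝ) (hF : ∀ t ∈ Set.Icc a b, HasSum (fun n => pstar μ n * d t n ^ 2) (F t))
    (hFc : ContinuousOn F (Set.Icc a b)) :
    Real.exp (2 * b) * F b ≤ Real.exp (2 * a) * F a := by
  have hcd : ∀ n, ContinuousOn (fun s => d s n) (Set.Icc a b) := fun n t ht =>
    (hd t ht n).continuousAt.continuousWithinAt
  set g : ℕ → ℝ → ℝ := fun n t => Real.exp (2 * t) * (pstar μ n * d t n ^ 2) with hg
  have hgc : ∀ n, ContinuousOn (g n) (Set.Icc a b) := fun n => by
    have := hcd n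
    simp only [hg]; fun_prop
  have hgi : ∀ n, IntervalIntegrable (g n) MeasureTheory.volume a b := fun n =>
    ContinuousOn.intervalIntegrable_of_Icc hab (hgc n)
  have hgn : ∀ n t, 0 ≤ g n t := fun n t =>
    mul_nonneg (Real.exp_pos _).le (mul_nonneg (pstar_pos μ hμ n).le (sq_nonneg _))
  have hI : Summable (fun n => ∫ t in a..b, g n t) := by
    refine summable_of_sum_range_le (c := ∫ t in a..b, Real.exp (2 * t) * F t)
      (fun n => intervalIntegral.integral_nonneg hab (fun t _ => hgn n t)) (fun m => ?_)
    rw [← intervalIntegral.integral_finsetSum (fun n _ => hgi n)]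
    refine intervalIntegral.integral_mono_on hab ?_ ?_ ?_
    · exact ContinuousOn.intervalIntegrable_of_Icc hab (continuousOn_finsetSum _ fun n _ => hgc n)
    · exact ContinuousOn.intervalIntegrable_of_Icc hab (by fun_prop)
    · intro t ht
      simp only [hg]
      rw [← Finset.mul_sum]
      gcongr
      exact sum_le_hasSum _ (fun n _ => mul_nonneg (pstar_pos μ hμ n).le (sq_nonneg _)) (hF t ht)
  have key : ∀ m : ℕ, (∑ n ∈ Finset.range (m + 1), g n b) - (∑ n ∈ Finset.range (m + 1), g n a)
      ≤ ((m : ℝ) + 1) * ∫ t in a..b, g (m + 1) t := by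
    intro m
    set g' : ℕ → ℝ → ℝ := fun n t =>
      2 * Real.exp (2 * t) * (pstar μ n * (d t n * dgen μ (d t) n)) with hg'
    have hder : ∀ t ∈ Set.uIcc a b, HasDerivAt (fun t => ∑ n ∈ Finset.range (m + 1), g n t)
        (∑ n ∈ Finset.range (m + 1), g' n t) t := by
      intro t ht
      rw [Set.uIcc_of_le hab] at ht
      refine HasDerivAt.fun_sum (fun n _ => ?_)
      have h1 : HasDerivAt (fun t : ℝ => Real.exp (2 * t)) (Real.exp (2 * t) * (2 * 1)) t :=
        ((hasDerivAt_id t).const_mul 2).exp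
      have h2 := h1.mul (((hd t ht n).pow 2).const_mul (pstar μ n))
      refine HasDerivAt.congr_deriv h2 ?_
      simp only [hg']
      simp
      ring
    have hg'c : ContinuousOn (fun t => ∑ n ∈ Finset.range (m + 1), g' n t) (Set.Icc a b) := by
      refine continuousOn_finsetSum _ fun n _ => ?_
      have h1 := hcd n
      have h2 := hcd (n + 1)
      have h3 := hcd (n - 1)
      simp only [hg', dgen]; fun_prop
    have hint := ContinuousOn.intervalIntegrable_of_Icc (μ := MeasureTheory.volume) hab hg'c
    rw [← intervalIntegral.integral_eq_sub_of_hasDerivAt hder hint,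
      ← intervalIntegral.integral_const_mul]
    refine intervalIntegral.integral_mono_on hab hint ((hgi (m + 1)).const_mul _) ?_
    intro t ht
    simp only [hg', hg]
    rw [← Finset.mul_sum, abel]
    have hb := bdry μ hμ (d t) m
    have hs : 0 ≤ μ * ∑ n ∈ Finset.range m, pstar μ n * (d t (n + 1) - d t n) ^ 2 :=
      mul_nonneg hμ.le (Finset.sum_nonneg fun n _ =>
        mul_nonneg (pstar_pos μ hμ n).le (sq_nonneg _))
    have he := Real.exp_pos (2 * t)
    have : -μ * (∑ n ∈ Finset.range m, pstar μ n * (d t (n + 1) - d t n) ^ 2)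
        + μ * pstar μ m * (d t m * (d t (m + 1) - d t m)) ≤
        ((m : ℝ) + 1) * (pstar μ (m + 1) * d t (m + 1) ^ 2) / 2 := by linarith
    calc _ ≤ 2 * Real.exp (2 * t) * (((m : ℝ) + 1) * (pstar μ (m + 1) * d t (m + 1) ^ 2) / 2) := by
          gcongr
      _ = _ := by ring
  by_contra hc
  push Not at hc
  have ht : ∀ t ∈ Set.Icc a b, Tendsto (fun m : ℕ => ∑ n ∈ Finset.range (m + 1), g n t) atTop
      (nhds (Real.exp (2 * t) * F t)) := fun t ht =>
    (tendsto_add_atTop_iff_nat 1).2 ((hF t ht).mul_left _).tendsto_sum_nat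
  have hlim := (ht b ⟨hab, le_rfl⟩).sub (ht a ⟨le_rfl, hab⟩)
  set δ := Real.exp (2 * b) * F b - Real.exp (2 * a) * F a with hδ
  have hδ0 : 0 < δ := by simp only [hδ]; linarith
  refine no_harmonic _ hI (δ / 2) (by linarith) ?_
  filter_upwards [hlim.eventually_const_le (show δ / 2 < δ by linarith)] with m hm
  exact hm.trans (key m)

/-- Bakry–Émery-type convexity: `d²/dt² E[p(t) - p*] ≥ -2 d/dt E[p(t) - p*]`,
where `E[q] = ∑_n q_n² / p*_n`. The uniform-convergence hypotheses on the energy series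
and its first and second termwise-differentiated series guarantee that `t ↦ E[p(t) - p*]`
is twice differentiable with derivatives given termwise; `E₁` and `E₂` denote its first
and second derivatives on `[0, ∞)`. -/
theorem energy_convexity (μ : ℝ) (hμ : 0 < μ) (p : ℝ → ℕ → ℝ)
    (hode : ∀ t ∈ Set.Ici (0 : ℝ), ∀ n : ℕ,
      HasDerivWithinAt (fun s => p s n) (gen μ (p t) n) (Set.Ici 0) t)
    (hV : ∀ t ∈ Set.Ici (0 : ℝ), memV μ (p t))
    (hunifE : UnifConvOnCompacts (fun n t => (p t n - pstar μ n) ^ 2 / pstar μ n))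
    (hunifE' : UnifConvOnCompacts
      (fun n t => 2 * (p t n - pstar μ n) * gen μ (p t) n / pstar μ n))
    (hunifE'' : UnifConvOnCompacts
      (fun n t => 2 * ((gen μ (p t) n) ^ 2 + (p t n - pstar μ n) * gen μ (gen μ (p t)) n)
        / pstar μ n)) :
    ∀ E₁ E₂ : ℝ → ℝ,
      (∀ t ∈ Set.Ici (0 : ℝ),
        HasDerivWithinAt (fun s => ∑' n : ℕ, (p s n - pstar μ n) ^ 2 / pstar μ n)
          (E₁ t) (Set.Ici 0) t) →
      (∀ t ∈ Set.Ici (0 : ℝ), HasDerivWithinAt E₁ (E₂ t) (Set.Ici 0) t) →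
      ∀ t ∈ Set.Ici (0 : ℝ), E₂ t ≥ -2 * E₁ t := by
  intro E₁ E₂ hE1 hE2
  have hc := pstar_pos μ hμ
  set h : ℝ → ℕ → ℝ := fun t n => p t n / pstar μ n with hh
  set d : ℝ → ℕ → ℝ := fun t n => h t (n + 1) - h t n with hd
  have hder : ∀ t ∈ Set.Ioi (0 : ℝ), ∀ n, HasDerivAt (fun s => p s n) (gen μ (p t) n) t :=
    fun t ht n => (hode t (Set.mem_Ici.2 (le_of_lt ht)) n).hasDerivAt (Ici_mem_nhds ht)
  have hderh : ∀ t ∈ Set.Ioi (0 : ℝ), ∀ n, HasDerivAt (fun s => h s n) (dgen μ (h t) n) t := by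
    intro t ht n
    have := (hder t ht n).div_const (pstar μ n)
    rw [gen_div μ hμ] at this
    exact this
  have hderd : ∀ t ∈ Set.Ioi (0 : ℝ), ∀ n,
      HasDerivAt (fun s => d s n) (dgen μ (d t) n - d t n) t := by
    intro t ht n
    refine ((hderh t ht (n + 1)).sub (hderh t ht n)).congr_deriv ?_
    cases n with
    | zero => simp [dgen, hd]; ring
    | succ n => simp [dgen, hd]; ring
  -- first derivative is given termwise
  have hE1eq : ∀ t ∈ Set.Ioi (0 : ℝ),
      E₁ t = ∑' n : ℕ, 2 * (p t n - pstar μ n) * gen μ (p t) n / pstar μ n := by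
    intro t ht
    have h1 : HasDerivAt (fun s => ∑' n : ℕ, (p s n - pstar μ n) ^ 2 / pstar μ n) (E₁ t) t :=
      (hE1 t (Set.mem_Ici.2 (le_of_lt ht))).hasDerivAt (Ici_mem_nhds ht)
    refine h1.unique ?_
    refine hasDerivAt_of_tendstoLocallyUniformlyOn (s := Set.Ioi (0 : ℝ)) (l := atTop)
      (f := fun (m : ℕ) (t : ℝ) => ∑ n ∈ Finset.range m, (p t n - pstar μ n) ^ 2 / pstar μ n)
      (f' := fun (m : ℕ) (t : ℝ) =>
        ∑ n ∈ Finset.range m, 2 * (p t n - pstar μ n) * gen μ (p t) n / pstar μ n)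
      (g' := fun t => ∑' n : ℕ, 2 * (p t n - pstar μ n) * gen μ (p t) n / pstar μ n)
      isOpen_Ioi ?_ ?_ ?_ ht
    · rw [tendstoLocallyUniformlyOn_iff_forall_isCompact isOpen_Ioi]
      intro K hK hKc
      exact hunifE' K (hK.trans Set.Ioi_subset_Ici_self) hKc
    · refine Eventually.of_forall fun m s hs => ?_
      refine HasDerivAt.fun_sum (fun n _ => ?_)
      refine ((((hder s hs n).sub_const (pstar μ n)).pow 2).div_const _).congr_deriv ?_
      simp
    · intro s hs
      exact (hunifE {s} (by simpa using le_of_lt hs) isCompact_singleton).tendsto_at rfl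
  have hgrad : ∀ t ∈ Set.Ioi (0 : ℝ),
      HasSum (fun n => pstar μ n * d t n ^ 2) (-(E₁ t / 2) / μ) := by
    intro t ht
    have k0 := (hunifE {t} (by simpa using le_of_lt ht) isCompact_singleton).tendsto_at
      (Set.mem_singleton t)
    have k1 := (hunifE' {t} (by simpa using le_of_lt ht) isCompact_singleton).tendsto_at
      (Set.mem_singleton t)
    rw [← hE1eq t ht] at k1
    have hs := summable_of_tendsto _ (fun n => div_nonneg (sq_nonneg _) (hc n).le) _ k0
    have := first_order μ hμ (fun n => h t n - 1) (E₁ t / 2) ?_ ?_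
    · simpa [hd] using this
    · refine hs.congr fun n => ?_
      have := (hc n).ne'
      simp only [hh]
      field_simp
    · refine (k1.div_const 2).congr fun m => ?_
      rw [Finset.sum_div]
      refine Finset.sum_congr rfl fun n _ => ?_
      have e := gen_div μ hμ (p t) n
      have e2 : dgen μ (fun n => h t n - 1) n = dgen μ (h t) n := by simp [dgen]
      rw [e2, ← e]
      have := (hc n).ne'
      simp only [hh]
      field_simp
  have hE1c : ContinuousOn E₁ (Set.Ici 0) := fun t ht => (hE2 t ht).continuousWithinAt
  have hmono : MonotoneOn (fun t => Real.exp (2 * t) * E₁ t) (Set.Ioi 0) := by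
    intro a ha b hb hab
    have hsub : Set.Icc a b ⊆ Set.Ioi 0 := fun t ht => lt_of_lt_of_le ha ht.1
    have hcc : ContinuousOn E₁ (Set.Icc a b) :=
      hE1c.mono (hsub.trans Set.Ioi_subset_Ici_self)
    have := grad_decay μ hμ d a b hab (fun t ht => hderd t (hsub ht))
      (fun t => -(E₁ t / 2) / μ) (fun t ht => hgrad t (hsub ht)) (by fun_prop)
    have h2 : ∀ t, Real.exp (2 * t) * (-(E₁ t / 2) / μ) = -(Real.exp (2 * t) * E₁ t) / (2 * μ) := by
      intro t; field_simp
    rw [h2, h2, div_le_div_iff_of_pos_right (by positivity)] at this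
    simpa using this
  have hmono' : MonotoneOn (fun t => Real.exp (2 * t) * E₁ t) (Set.Ici 0) := by
    have hcont : ContinuousOn (fun t => Real.exp (2 * t) * E₁ t) (Set.Ici 0) := by fun_prop
    have hk := hmono.insert_of_continuousWithinAt (x := 0)
      (by rw [← mem_closure_iff_clusterPt, closure_Ioi]; exact Set.self_mem_Ici)
      ((hcont 0 Set.self_mem_Ici).mono Set.Ioi_subset_Ici_self)
    rwa [Set.Ioi_insert] at hk
  intro t ht
  have h1 : HasDerivAt (fun t : ℝ => Real.exp (2 * t)) (Real.exp (2 * t) * (2 * 1)) t :=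
    ((hasDerivAt_id t).const_mul 2).exp
  have h2 := h1.hasDerivWithinAt.mul (hE2 t ht)
  have h3 : 0 ≤ Real.exp (2 * t) * (2 * 1) * E₁ t + Real.exp (2 * t) * E₂ t := by
    have h4 := hmono'.derivWithin_nonneg (x := t)
    have h5 := h2.derivWithin (uniqueDiffOn_Ici 0 t ht)
    rw [← h5]; exact h4
  have he := Real.exp_pos (2 * t)
  have h6 : 0 ≤ Real.exp (2 * t) * (2 * E₁ t + E₂ t) := by linarith
  have h7 := nonneg_of_mul_nonneg_right h6 he
  linarith
end

section
/- Fix integers N ≥ 2 and μ ≥ 1. Let P, R : [0,∞) → probability measures on ℕ^N be two solutions of the poor-biased master equation with initial conditions P_0 = δ_S and R_0 = δ_R the Dirac masses at two configurations S, R ∈ 𝒜_{N,μ}. Then for every t ≥ 0, W₁(P_t, R_t) ≤ 2·μ·e^{−t}, where W₁ is the normalized Wasserstein-1 distance on ℕ^N. -/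
open MeasureTheory ENNReal

noncomputable section

/-- The configuration obtained from `S` by adding a dollar to agent `i` and removing
one from agent `j`, i.e. `S + e_i - e_j`. -/
def moveDollar {N : ℕ} (S : Fin N → ℕ) (i j : Fin N) : Fin N → ℕ :=
  Function.update (Function.update S i (S i + 1)) j (S j - 1)

/-- The right-hand side of the poor-biased master equation at configuration `S`:
`∑_{i ≠ j} [((S_i+1)/N) P(S + e_i - e_j) 1_{S_j ≥ 1} - (S_i/N) P(S)]`. -/
def masterRHS {N : ℕ} (P : Measure (Fin N → ℕ)) (S : Fin N → ℕ) : ℝ :=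
  ∑ i : Fin N, ∑ j : Fin N,
    if i ≠ j then
      (((S i : ℝ) + 1) / N) * (P {moveDollar S i j}).toReal * (if 1 ≤ S j then 1 else 0)
        - ((S i : ℝ) / N) * (P {S}).toReal
    else 0

/-- A solution of the poor-biased master equation on `[0, ∞)`: a family of probability
measures on `ℕ^N` whose point masses are differentiable in time with derivative given
by the master equation. -/
def IsMasterSolution {N : ℕ} (P : ℝ → Measure (Fin N → ℕ)) : Prop :=
  (∀ t ∈ Set.Ici (0 : ℝ), IsProbabilityMeasure (P t)) ∧
    ∀ S : Fin N → ℕ, ∀ t ∈ Set.Ici (0 : ℝ),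
      HasDerivWithinAt (fun s => ((P s) {S}).toReal) (masterRHS (P t) S) (Set.Ici 0) t

/-- The normalized Wasserstein-1 distance (valued in `ℝ≥0∞`) between two measures on
`ℕ^d`: the infimum over couplings of the expected normalized `ℓ¹` distance. -/
def W1 (d : ℕ) (π₁ π₂ : Measure (Fin d → ℕ)) : ℝ≥0∞ :=
  ⨅ (π : Measure ((Fin d → ℕ) × (Fin d → ℕ))) (_ : π.map Prod.fst = π₁)
      (_ : π.map Prod.snd = π₂),
    ∫⁻ z, (∑ j : Fin d, (Nat.dist (z.1 j) (z.2 j) : ℝ≥0∞)) / (d : ℝ≥0∞) ∂π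

/-- occupation counts of a labelled configuration -/
def cnt {N M : ℕ} (x : Fin M → Fin N) (i : Fin N) : ℕ := ∑ k, if x k = i then 1 else 0

/-- linear form of the master equation right-hand side -/
def rhsF {N : ℕ} (v : (Fin N → ℕ) → ℝ) (S : Fin N → ℕ) : ℝ :=
  ∑ i : Fin N, ∑ j : Fin N,
    if i ≠ j then
      (((S i : ℝ) + 1) / N) * v (moveDollar S i j) * (if 1 ≤ S j then 1 else 0)
        - ((S i : ℝ) / N) * v S
    else 0

lemma moveDollar_apply {N : ℕ} (S : Fin N → ℕ) {i j : Fin N} (h : i ≠ j) (l : Fin N) :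
    moveDollar S i j l = if l = j then S j - 1 else if l = i then S i + 1 else S l := by
  unfold moveDollar
  simp only [Function.update_apply]

lemma cnt_update {N M : ℕ} (x : Fin M → Fin N) (k : Fin M) (b : Fin N) (h : x k ≠ b) :
    cnt (Function.update x k b) = moveDollar (cnt x) b (x k) := by
  have key : ∀ l, cnt (Function.update x k b) l + (if x k = l then 1 else 0)
      = cnt x l + (if b = l then 1 else 0) := by
    intro l
    unfold cnt
    rw [← Finset.add_sum_erase _ _ (Finset.mem_univ k),
      ← Finset.add_sum_erase (a := k) (f := fun k => if x k = l then 1 else 0) _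
        (Finset.mem_univ k)]
    have : ∑ c ∈ Finset.univ.erase k, (if Function.update x k b c = l then 1 else 0)
        = ∑ c ∈ Finset.univ.erase k, (if x c = l then 1 else 0) := by
      refine Finset.sum_congr rfl fun c hc => ?_
      rw [Function.update_of_ne (Finset.ne_of_mem_erase hc)]
    rw [this]
    simp only [Function.update_self]
    ring
  ext l
  rw [moveDollar_apply _ h.symm]
  have := key l
  split_ifs with h1 h2
  · subst h1; simp [h.symm] at this; omega
  · subst h2; simp [h] at this; omega
  · simp [Ne.symm h1, Ne.symm h2] at this; omega

lemma cnt_sum_comp {N M : ℕ} (x : Fin M → Fin N) (H : Fin N → ℝ) :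
    ∑ k, H (x k) = ∑ i, (cnt x i : ℝ) * H i := by
  unfold cnt
  push_cast
  simp_rw [Finset.sum_mul]
  rw [Finset.sum_comm]
  refine Finset.sum_congr rfl fun k _ => ?_
  simp

lemma cnt_sum {N M : ℕ} (x : Fin M → Fin N) : ∑ i, cnt x i = M := by
  have := cnt_sum_comp x (fun _ => 1)
  simp at this
  exact_mod_cast this.symm

lemma move_eq_iff {N : ℕ} (s T : Fin N → ℕ) {i b : Fin N} (h : i ≠ b) (hs : 1 ≤ s i) :
    moveDollar s b i = T ↔ (s = moveDollar T i b ∧ 1 ≤ T b) := by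
  constructor
  · rintro rfl
    constructor
    · ext l
      rw [moveDollar_apply _ h, moveDollar_apply _ h.symm, moveDollar_apply _ h.symm,
        moveDollar_apply _ h.symm]
      split_ifs <;> simp_all
    · rw [moveDollar_apply _ h.symm]; simp [h.symm]
  · rintro ⟨rfl, hb⟩
    ext l
    rw [moveDollar_apply _ h.symm, moveDollar_apply _ h, moveDollar_apply _ h,
      moveDollar_apply _ h]
    split_ifs <;> simp_all

lemma moveDollar_sum {N : ℕ} (T : Fin N → ℕ) {i b : Fin N} (h : i ≠ b) (hb : 1 ≤ T b) :
    ∑ l, moveDollar T i b l = ∑ l, T l := by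
  have : ∀ l, moveDollar T i b l + (if b = l then 1 else 0) = T l + (if i = l then 1 else 0) := by
    intro l
    rw [moveDollar_apply _ h]
    by_cases h1 : b = l
    · subst h1
      simp [h]
      omega
    · by_cases h2 : i = l
      · subst h2; simp [h, h1]
      · simp [h1, h2, Ne.symm h1, Ne.symm h2]
  have h2 := Finset.sum_congr (s₁ := Finset.univ) rfl (fun l _ => this l)
  simp [Finset.sum_add_distrib] at h2
  exact h2

lemma gen_eq {N M : ℕ} (hN : 0 < N) (x : Fin M → Fin N) (T : Fin N → ℕ) :
    ∑ k, ((1 / (N : ℝ)) * (∑ b, if cnt (Function.update x k b) = T then (1 : ℝ) else 0)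
      - (if cnt x = T then 1 else 0)) = rhsF (fun s => if cnt x = s then 1 else 0) T := by
  have hN' : (N : ℝ) ≠ 0 := by positivity
  have h1 : ∀ k, ((1 / (N : ℝ)) * (∑ b, if cnt (Function.update x k b) = T then (1 : ℝ) else 0)
      - (if cnt x = T then 1 else 0)) =
      (fun i => (1 / (N : ℝ)) * ∑ b, if i ≠ b then
        (if moveDollar (cnt x) b i = T then (1 : ℝ) else 0) - (if cnt x = T then 1 else 0)
        else 0) (x k) := by
    intro k
    have aux : ∀ (c : ℝ) (f : Fin N → ℝ),
        (1 / (N : ℝ)) * ∑ b, f b - c = (1 / (N : ℝ)) * ∑ b, (f b - c) := by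
      intro c f
      rw [Finset.sum_sub_distrib]
      simp
      field_simp
    rw [aux]
    dsimp only
    congr 1
    refine Finset.sum_congr rfl fun b _ => ?_
    by_cases hb : x k = b
    · subst hb; simp
    · rw [cnt_update x k b hb]; simp [hb]
  rw [Finset.sum_congr rfl (fun k _ => h1 k), cnt_sum_comp x (fun i => (1 / (N : ℝ)) * ∑ b, if i ≠ b then
        (if moveDollar (cnt x) b i = T then (1 : ℝ) else 0) - (if cnt x = T then 1 else 0)
        else 0)]
  unfold rhsF
  refine Finset.sum_congr rfl fun i _ => ?_
  rw [Finset.mul_sum, Finset.mul_sum]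
  refine Finset.sum_congr rfl fun b _ => ?_
  by_cases hb : i = b
  · simp [hb]
  simp only [ne_eq, hb, not_false_eq_true, if_true]
  have e2 : (cnt x i : ℝ) * (if cnt x = T then (1 : ℝ) else 0)
      = (T i : ℝ) * (if cnt x = T then (1 : ℝ) else 0) := by
    split_ifs with h
    · rw [h]
    · simp
  have e1 : (cnt x i : ℝ) * (if moveDollar (cnt x) b i = T then (1 : ℝ) else 0)
      = ((T i : ℝ) + 1) * ((if cnt x = moveDollar T i b then (1 : ℝ) else 0)
        * (if 1 ≤ T b then 1 else 0)) := by
    by_cases hs : 1 ≤ cnt x i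
    · have := move_eq_iff (cnt x) T hb hs
      by_cases h : moveDollar (cnt x) b i = T
      · obtain ⟨h3, h4⟩ := this.1 h
        rw [if_pos h, if_pos h3, if_pos h4, h3, moveDollar_apply _ hb]
        simp [hb]
      · rw [if_neg h]
        by_cases h3 : cnt x = moveDollar T i b
        · have : ¬ (1 ≤ T b) := fun h4 => h (this.2 ⟨h3, h4⟩)
          simp only [this, if_false, mul_zero]
        · simp [h3]
    · have h0 : cnt x i = 0 := by omega
      have : cnt x ≠ moveDollar T i b := by
        intro h
        rw [h, moveDollar_apply _ hb] at h0
        simp [hb] at h0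
      simp [h0, this]
  linear_combination (1 / (N : ℝ)) * e1 - (1 / (N : ℝ)) * e2

/-- weight of a single dollar: `none` = not yet resampled -/
def wt (N : ℕ) (t : ℝ) (o : Option (Fin N)) : ℝ :=
  o.elim (Real.exp (-t)) (fun _ => (1 - Real.exp (-t)) / N)

/-- resampling weights -/
def cw (N : ℕ) (o : Option (Fin N)) : ℝ := o.elim 0 (fun _ => 1 / (N : ℝ))

lemma wt_sum {N : ℕ} (hN : 0 < N) (t : ℝ) : ∑ o, wt N t o = 1 := by
  have hN' : (N : ℝ) ≠ 0 := by positivity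
  simp [Fintype.sum_option, wt]
  field_simp
  ring

lemma wt_nonneg {N : ℕ} {t : ℝ} (ht : 0 ≤ t) (o : Option (Fin N)) : 0 ≤ wt N t o := by
  have : Real.exp (-t) ≤ 1 := by simpa using ht
  have h2 := Real.exp_pos (-t)
  cases o with
  | none => simp [wt]; positivity
  | some b => simp only [wt, Option.elim]; exact div_nonneg (by linarith) (by positivity)

lemma wt_deriv {N : ℕ} (t : ℝ) (o : Option (Fin N)) :
    HasDerivAt (fun t => wt N t o) (cw N o - wt N t o) t := by
  have h : HasDerivAt (fun t : ℝ => Real.exp (-t)) (-Real.exp (-t)) t := by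
    simpa using (hasDerivAt_neg t).exp
  cases o with
  | none => simpa [wt, cw] using h
  | some b =>
    simp only [wt, cw, Option.elim]
    refine ((h.const_sub 1).div_const (N : ℝ)).congr_deriv ?_
    ring

/-- product weight -/
def pw {N M : ℕ} (t : ℝ) (ω : Fin M → Option (Fin N)) : ℝ := ∏ k, wt N t (ω k)

lemma pw_sum {N M : ℕ} (hN : 0 < N) (t : ℝ) : ∑ ω : Fin M → Option (Fin N), pw t ω = 1 := by
  unfold pw
  rw [← Fintype.prod_sum (fun (_ : Fin M) o => wt N t o)]
  simp [wt_sum hN]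

lemma pw_nonneg {N M : ℕ} {t : ℝ} (ht : 0 ≤ t) (ω : Fin M → Option (Fin N)) : 0 ≤ pw t ω :=
  Finset.prod_nonneg fun _ _ => wt_nonneg ht _

/-- swapping the `k`-th coordinate with an external one -/
def swapEquiv {M : ℕ} {α : Type*} (k : Fin M) : (Fin M → α) × α ≃ (Fin M → α) × α where
  toFun p := (Function.update p.1 k p.2, p.1 k)
  invFun p := (Function.update p.1 k p.2, p.1 k)
  left_inv p := by simp
  right_inv p := by simp

lemma resample {M : ℕ} {α : Type*} [Fintype α] (w c : α → ℝ) (hw : ∑ o, w o = 1)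
    (k : Fin M) (h : (Fin M → α) → ℝ) :
    ∑ ω : Fin M → α, (∏ l ∈ Finset.univ.erase k, w (ω l)) * c (ω k) * h ω
      = ∑ ω : Fin M → α, (∏ l, w (ω l)) * ∑ o, c o * h (Function.update ω k o) := by
  have h1 : ∑ ω : Fin M → α, (∏ l ∈ Finset.univ.erase k, w (ω l)) * c (ω k) * h ω
      = ∑ p : (Fin M → α) × α,
        w p.2 * ((∏ l ∈ Finset.univ.erase k, w (p.1 l)) * c (p.1 k) * h p.1) := by
    rw [Fintype.sum_prod_type]
    refine Finset.sum_congr rfl fun ω _ => ?_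
    dsimp only
    rw [← Finset.sum_mul, hw, one_mul]
  rw [h1, ← (swapEquiv k).sum_comp, Fintype.sum_prod_type]
  refine Finset.sum_congr rfl fun ω _ => ?_
  rw [Finset.mul_sum]
  refine Finset.sum_congr rfl fun o _ => ?_
  simp only [swapEquiv, Equiv.coe_fn_mk, Function.update_self]
  have : ∏ l ∈ Finset.univ.erase k, w (Function.update ω k o l)
      = ∏ l ∈ Finset.univ.erase k, w (ω l) := by
    refine Finset.prod_congr rfl fun c hc => ?_
    rw [Function.update_of_ne (Finset.ne_of_mem_erase hc)]
  rw [this, ← Finset.mul_prod_erase _ _ (Finset.mem_univ k)]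
  ring

/-- labelled positions -/
def pos {N M : ℕ} (x : Fin M → Fin N) (ω : Fin M → Option (Fin N)) : Fin M → Fin N :=
  fun k => (ω k).getD (x k)

lemma pos_update {N M : ℕ} (x : Fin M → Fin N) (ω : Fin M → Option (Fin N)) (k : Fin M)
    (b : Fin N) : pos x (Function.update ω k (some b)) = Function.update (pos x ω) k b := by
  ext l
  by_cases h : l = k
  · subst h; simp [pos]
  · simp [pos, h]

/-- explicit solution -/
def sol {N M : ℕ} (x : Fin M → Fin N) (t : ℝ) (T : Fin N → ℕ) : ℝ :=
  ∑ ω : Fin M → Option (Fin N), pw t ω * (if cnt (pos x ω) = T then 1 else 0)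

lemma sol_deriv {N M : ℕ} (hN : 0 < N) (x : Fin M → Fin N) (t : ℝ) (T : Fin N → ℕ) :
    HasDerivAt (fun t => sol x t T) (rhsF (sol x t) T) t := by
  have h1 : HasDerivAt (fun t => sol x t T)
      (∑ ω : Fin M → Option (Fin N), (∑ k, (∏ l ∈ Finset.univ.erase k, wt N t (ω l)) •
        (cw N (ω k) - wt N t (ω k))) * (if cnt (pos x ω) = T then 1 else 0)) t := by
    unfold sol pw
    refine HasDerivAt.fun_sum fun ω _ => ?_
    exact (HasDerivAt.fun_finsetProd fun k _ => wt_deriv t (ω k)).mul_const _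
  convert h1 using 1
  have h2 : rhsF (sol x t) T = ∑ ω : Fin M → Option (Fin N),
      pw t ω * rhsF (fun s => if cnt (pos x ω) = s then 1 else 0) T := by
    unfold rhsF sol
    simp_rw [Finset.mul_sum]
    rw [Finset.sum_comm]
    rw [Finset.sum_comm]
    conv_rhs => rw [Finset.sum_comm]
    refine Finset.sum_congr rfl fun i _ => ?_
    rw [Finset.sum_comm]
    refine Finset.sum_congr rfl fun j _ => ?_
    by_cases hij : i = j
    · simp [hij]
    simp only [ne_eq, hij, not_false_eq_true, if_true]
    rw [Finset.sum_mul, ← Finset.sum_sub_distrib]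
    refine Finset.sum_congr rfl fun ω _ => ?_
    ring
  rw [h2]
  simp_rw [← gen_eq hN, Finset.sum_mul, Finset.mul_sum]
  rw [Finset.sum_comm]
  conv_rhs => rw [Finset.sum_comm]
  refine Finset.sum_congr rfl fun k _ => ?_
  have h3 := resample (wt N t) (cw N) (wt_sum hN t) k
    (fun ω => if cnt (pos x ω) = T then 1 else 0)
  have h4 : ∀ ω : Fin M → Option (Fin N),
      ((∏ l ∈ Finset.univ.erase k, wt N t (ω l)) • (cw N (ω k) - wt N t (ω k)))
        * (if cnt (pos x ω) = T then (1 : ℝ) else 0)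
      = (∏ l ∈ Finset.univ.erase k, wt N t (ω l)) * cw N (ω k)
        * (if cnt (pos x ω) = T then (1 : ℝ) else 0)
        - pw t ω * (if cnt (pos x ω) = T then (1 : ℝ) else 0) := by
    intro ω
    unfold pw
    rw [← Finset.mul_prod_erase _ _ (Finset.mem_univ k), smul_eq_mul]
    ring
  rw [Finset.sum_congr rfl (fun ω _ => h4 ω), Finset.sum_sub_distrib, h3,
    ← Finset.sum_sub_distrib]
  refine Finset.sum_congr rfl fun ω _ => ?_
  simp only [Fintype.sum_option, cw, Option.elim, pos_update, pw]
  simp only [← Finset.mul_sum]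
  ring

lemma sol_zero {N M : ℕ} (x : Fin M → Fin N) (T : Fin N → ℕ) :
    sol x 0 T = if cnt x = T then 1 else 0 := by
  unfold sol
  rw [Finset.sum_eq_single (fun _ => none)]
  · have : pos x (fun _ => none) = x := by ext; simp [pos]
    rw [this]
    simp [pw, wt]
  · intro ω _ hω
    have : ∃ k, ω k ≠ none := by
      by_contra! h
      exact hω (funext h)
    obtain ⟨k, hk⟩ := this
    have : pw 0 ω = 0 := by
      unfold pw
      refine Finset.prod_eq_zero (Finset.mem_univ k) ?_
      obtain ⟨b, hb⟩ := Option.ne_none_iff_exists'.1 hk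
      simp [hb, wt]
    simp [this]
  · simp

/-- level set -/
abbrev Lev (N M : ℕ) := {T : Fin N → ℕ // ∑ i, T i = M}

instance levFinite (N M : ℕ) : Finite (Lev N M) := by
  refine Set.Finite.subset (Finset.finite_toSet (Finset.piAntidiag Finset.univ M)) ?_
  intro T hT
  have hT' : ∑ i, T i = M := hT
  simpa using hT'

/-- extension by zero -/
def extL {N M : ℕ} (v : Lev N M → ℝ) (S : Fin N → ℕ) : ℝ :=
  if h : ∑ i, S i = M then v ⟨S, h⟩ else 0

/-- the vector field on the level set -/
def vfield (N M : ℕ) : (Lev N M → ℝ) →ₗ[ℝ] (Lev N M → ℝ) where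
  toFun v T := rhsF (extL v) T.1
  map_add' v w := by
    have : extL (v + w) = extL v + extL w := by
      ext S; unfold extL; simp only [Pi.add_apply]; split_ifs <;> simp
    ext T
    simp only [this, rhsF, Pi.add_apply, ← Finset.sum_add_distrib]
    refine Finset.sum_congr rfl fun i _ => Finset.sum_congr rfl fun j _ => ?_
    by_cases h : i = j
    · simp [h]
    · simp only [ne_eq, h, not_false_eq_true, if_true]; ring
  map_smul' c v := by
    have : extL (c • v) = c • extL v := by
      ext S; unfold extL; simp only [Pi.smul_apply]; split_ifs <;> simp
    ext T
    simp only [this, rhsF, Pi.smul_apply, smul_eq_mul, RingHom.id_apply, Finset.mul_sum]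
    refine Finset.sum_congr rfl fun i _ => Finset.sum_congr rfl fun j _ => ?_
    by_cases h : i = j
    · simp [h]
    · simp only [ne_eq, h, not_false_eq_true, if_true]; ring

lemma vfield_restrict {N M : ℕ} (v : (Fin N → ℕ) → ℝ) (T : Lev N M) :
    vfield N M (fun S => v S.1) T = rhsF v T.1 := by
  change rhsF _ T.1 = _
  unfold rhsF
  refine Finset.sum_congr rfl fun i _ => Finset.sum_congr rfl fun j _ => ?_
  by_cases h : i = j
  · simp [h]
  simp only [ne_eq, h, not_false_eq_true, if_true]
  have e1 : extL (M := M) (fun S => v S.1) T.1 = v T.1 := by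
    unfold extL; rw [dif_pos T.2]
  rw [e1]
  by_cases hj : 1 ≤ T.1 j
  · have e2 : extL (M := M) (fun S => v S.1) (moveDollar T.1 i j) = v (moveDollar T.1 i j) := by
      unfold extL; rw [dif_pos ((moveDollar_sum T.1 h hj).trans T.2)]
    rw [e2]
  · simp [hj]

lemma uniq {N M : ℕ} (f g : ℝ → (Fin N → ℕ) → ℝ)
    (hf : ∀ T, ∀ t ∈ Set.Ici (0 : ℝ),
      HasDerivWithinAt (fun s => f s T) (rhsF (f t) T) (Set.Ici 0) t)
    (hg : ∀ T, ∀ t ∈ Set.Ici (0 : ℝ),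
      HasDerivWithinAt (fun s => g s T) (rhsF (g t) T) (Set.Ici 0) t)
    (h0 : f 0 = g 0) (t : ℝ) (ht : 0 ≤ t) (T : Fin N → ℕ) (hT : ∑ i, T i = M) :
    f t T = g t T := by
  have := Fintype.ofFinite (Lev N M)
  have key : ∀ f : ℝ → (Fin N → ℕ) → ℝ, (∀ T, ∀ t ∈ Set.Ici (0 : ℝ),
      HasDerivWithinAt (fun s => f s T) (rhsF (f t) T) (Set.Ici 0) t) →
      ∀ s ∈ Set.Ici (0 : ℝ), HasDerivWithinAt (fun s => fun S : Lev N M => f s S.1)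
        (LinearMap.toContinuousLinearMap (vfield N M) (fun S => f s S.1)) (Set.Ici 0) s := by
    intro f hf s hs
    rw [hasDerivWithinAt_pi]
    intro S
    have := hf S.1 s hs
    rw [← vfield_restrict (M := M) (f s) S] at this
    exact this
  have E := ODE_solution_unique (a := 0) (b := t)
    (v := fun _ => LinearMap.toContinuousLinearMap (vfield N M))
    (f := fun s => fun S : Lev N M => f s S.1) (g := fun s => fun S : Lev N M => g s S.1)
    (fun _ => (LinearMap.toContinuousLinearMap (vfield N M)).lipschitz)
    (fun s hs => (key f hf s hs.1).continuousWithinAt.mono Set.Icc_subset_Ici_self)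
    (fun s hs => (key f hf s hs.1).mono (Set.Ici_subset_Ici.2 hs.1))
    (fun s hs => (key g hg s hs.1).continuousWithinAt.mono Set.Icc_subset_Ici_self)
    (fun s hs => (key g hg s hs.1).mono (Set.Ici_subset_Ici.2 hs.1))
    (by simp [h0])
  exact congrFun (E ⟨ht, le_rfl⟩) ⟨T, hT⟩

lemma exists_label {N M : ℕ} (S : Fin N → ℕ) (hS : ∑ i, S i = M) :
    ∃ x : Fin M → Fin N, cnt x = S := by
  have e : Fin M ≃ (Σ i, Fin (S i)) := Fintype.equivOfCardEq (by simp [hS])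
  refine ⟨fun k => (e k).1, ?_⟩
  ext i
  unfold cnt
  rw [e.sum_comp (fun p => if p.1 = i then 1 else 0), Fintype.sum_sigma]
  rw [Finset.sum_eq_single i]
  · simp
  · intro j _ hj
    simp [hj]
  · simp

lemma law_eq {N M : ℕ} (hN : 0 < N) (S : Fin N → ℕ) (x : Fin M → Fin N) (hx : cnt x = S)
    (P : ℝ → Measure (Fin N → ℕ)) (hP : IsMasterSolution P) (hP0 : P 0 = Measure.dirac S)
    (t : ℝ) (ht : 0 ≤ t) :
    (∑ ω : Fin M → Option (Fin N), ENNReal.ofReal (pw t ω) • Measure.dirac (cnt (pos x ω)))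
      = P t := by
  have := hP.1 t ht
  have hU : (∑ ω : Fin M → Option (Fin N),
      ENNReal.ofReal (pw t ω) • Measure.dirac (cnt (pos x ω))) Set.univ = 1 := by
    simp [Measure.finsetSum_apply]
    rw [← ENNReal.ofReal_sum_of_nonneg (fun ω _ => pw_nonneg ht ω), pw_sum hN]
    simp
  have : IsProbabilityMeasure (∑ ω : Fin M → Option (Fin N),
      ENNReal.ofReal (pw t ω) • Measure.dirac (cnt (pos x ω))) := ⟨hU⟩
  have hsing : ∀ T, (∑ ω : Fin M → Option (Fin N),
      ENNReal.ofReal (pw t ω) • Measure.dirac (cnt (pos x ω))) {T}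
        = ENNReal.ofReal (sol x t T) := by
    intro T
    unfold sol
    rw [ENNReal.ofReal_sum_of_nonneg
      (fun ω _ => mul_nonneg (pw_nonneg ht ω) (by split_ifs <;> simp))]
    rw [Measure.finsetSum_apply]
    refine Finset.sum_congr rfl fun ω _ => ?_
    by_cases h : cnt (pos x ω) = T <;> simp [h]
  have hle : ∀ T, (∑ ω : Fin M → Option (Fin N),
      ENNReal.ofReal (pw t ω) • Measure.dirac (cnt (pos x ω))) {T} ≤ P t {T} := by
    intro T
    rw [hsing]
    by_cases hT : ∑ i, T i = M
    · rw [← uniq (fun s T => (P s {T}).toReal) (sol x) (fun T t ht => hP.2 T t ht)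
        (fun T t _ => (sol_deriv hN x t T).hasDerivWithinAt) ?_ t ht T hT]
      · rw [ENNReal.ofReal_toReal (measure_ne_top _ _)]
      · ext T
        rw [sol_zero, hP0, hx]
        by_cases h : S = T <;> simp [h]
    · have : sol x t T = 0 := by
        unfold sol
        refine Finset.sum_eq_zero fun ω _ => ?_
        have : cnt (pos x ω) ≠ T := by
          rintro rfl
          exact hT (cnt_sum _)
        simp [this]
      simp [this]
  refine Measure.eq_of_le_of_measure_univ_eq ?_ (by rw [hU, measure_univ])
  rw [Measure.le_iff]
  intro s _
  rw [← Set.biUnion_of_singleton s]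
  rw [measure_biUnion s.to_countable (by intro a _ b _ hab; simpa using hab)
      (fun _ _ => measurableSet_singleton _),
    measure_biUnion s.to_countable (by intro a _ b _ hab; simpa using hab)
      (fun _ _ => measurableSet_singleton _)]
  exact ENNReal.tsum_le_tsum fun p => hle _

lemma dist_sum_le {N M : ℕ} (x y : Fin M → Fin N) (ω : Fin M → Option (Fin N)) :
    ∑ j, Nat.dist (cnt (pos x ω) j) (cnt (pos y ω) j)
      ≤ 2 * ∑ k, (if ω k = none then 1 else 0) := by
  have h1 : ∀ j, Nat.dist (cnt (pos x ω) j) (cnt (pos y ω) j)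
      ≤ ∑ k, if ω k = none then
        ((if x k = j then 1 else 0) + (if y k = j then 1 else 0)) else 0 := by
    intro j
    have a : cnt (pos x ω) j ≤ cnt (pos y ω) j + ∑ k, if ω k = none then
        ((if x k = j then 1 else 0) + (if y k = j then 1 else 0)) else 0 := by
      unfold cnt
      rw [← Finset.sum_add_distrib]
      refine Finset.sum_le_sum fun k _ => ?_
      unfold pos
      cases ω k <;> simp
      split_ifs <;> omega
    have b : cnt (pos y ω) j ≤ cnt (pos x ω) j + ∑ k, if ω k = none then
        ((if x k = j then 1 else 0) + (if y k = j then 1 else 0)) else 0 := by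
      unfold cnt
      rw [← Finset.sum_add_distrib]
      refine Finset.sum_le_sum fun k _ => ?_
      unfold pos
      cases ω k <;> simp
      split_ifs <;> omega
    unfold Nat.dist
    omega
  refine (Finset.sum_le_sum fun j _ => h1 j).trans ?_
  rw [Finset.sum_comm, Finset.mul_sum]
  refine Finset.sum_le_sum fun k _ => ?_
  by_cases h : ω k = none <;> simp [h, Finset.sum_add_distrib]

lemma expect_none {N M : ℕ} (hN : 0 < N) (t : ℝ) :
    ∑ ω : Fin M → Option (Fin N), pw t ω * (2 * ∑ k, (if ω k = none then (1 : ℝ) else 0))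
      = 2 * M * Real.exp (-t) := by
  have h1 : ∀ k : Fin M, ∑ ω : Fin M → Option (Fin N), pw t ω * (if ω k = none then (1 : ℝ) else 0)
      = Real.exp (-t) := by
    intro k
    have h := resample (wt N t) (fun o => wt N t o * (if o = none then (1 : ℝ) else 0))
      (wt_sum hN t) k (fun _ => 1)
    have e : ∑ o, wt N t o * (if o = none then (1 : ℝ) else 0) = Real.exp (-t) := by
      simp [Fintype.sum_option, wt]
    simp only [mul_one, e] at h
    rw [← Finset.sum_mul] at h
    have p := pw_sum (M := M) hN t
    unfold pw at p
    rw [p, one_mul] at h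
    rw [← h]
    refine Finset.sum_congr rfl fun ω _ => ?_
    unfold pw
    rw [← Finset.mul_prod_erase _ _ (Finset.mem_univ k)]
    ring
  have : ∀ ω : Fin M → Option (Fin N), pw t ω * (2 * ∑ k, (if ω k = none then (1 : ℝ) else 0))
      = ∑ k, 2 * (pw t ω * (if ω k = none then (1 : ℝ) else 0)) := by
    intro ω
    rw [Finset.mul_sum, Finset.mul_sum]
    refine Finset.sum_congr rfl fun k _ => ?_
    ring
  rw [Finset.sum_congr rfl (fun ω _ => this ω), Finset.sum_comm]
  simp_rw [← Finset.mul_sum, h1]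
  simp
  ring

/-- Contraction between two solutions of the poor-biased master equation started from
Dirac masses at configurations in `𝒜_{N,μ}`: `W₁(P_t, R_t) ≤ 2 μ e^{-t}`. -/
theorem master_equation_contraction (N μ : ℕ) (hN : 2 ≤ N) (hμ : 1 ≤ μ)
    (S R : Fin N → ℕ) (hS : ∑ i, S i = N * μ) (hR : ∑ i, R i = N * μ)
    (P Q : ℝ → Measure (Fin N → ℕ))
    (hP : IsMasterSolution P) (hQ : IsMasterSolution Q)
    (hP0 : P 0 = Measure.dirac S) (hQ0 : Q 0 = Measure.dirac R) :
    ∀ t ∈ Set.Ici (0 : ℝ),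
      W1 N (P t) (Q t) ≤ ENNReal.ofReal (2 * μ * Real.exp (-t)) := by
  intro t ht
  have hN0 : 0 < N := by omega
  obtain ⟨x, hx⟩ := exists_label S hS
  obtain ⟨y, hy⟩ := exists_label R hR
  have ht' : 0 ≤ t := ht
  unfold W1
  refine (iInf_le _ (∑ ω : Fin (N * μ) → Option (Fin N),
    ENNReal.ofReal (pw t ω) • Measure.dirac (cnt (pos x ω), cnt (pos y ω)))).trans ?_
  refine (iInf_le _ ?_).trans ((iInf_le _ ?_).trans ?_)
  · rw [← law_eq hN0 S x hx P hP hP0 t ht', ← Measure.mapₗ_apply_of_measurable measurable_fst,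
      map_sum]
    refine Finset.sum_congr rfl fun ω _ => ?_
    rw [Measure.mapₗ_apply_of_measurable measurable_fst, Measure.map_smul,
      Measure.map_dirac' measurable_fst]
  · rw [← law_eq hN0 R y hy Q hQ hQ0 t ht', ← Measure.mapₗ_apply_of_measurable measurable_snd,
      map_sum]
    refine Finset.sum_congr rfl fun ω _ => ?_
    rw [Measure.mapₗ_apply_of_measurable measurable_snd, Measure.map_smul,
      Measure.map_dirac' measurable_snd]
  · rw [lintegral_finsetSum_measure]
    simp only [lintegral_smul_measure, lintegral_dirac, smul_eq_mul]
    have hN1 : (0 : ℝ) < N := by exact_mod_cast hN0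
    have e : 2 * (μ : ℝ) * Real.exp (-t) = ∑ ω : Fin (N * μ) → Option (Fin N),
        pw t ω * ((2 * ∑ k, (if ω k = none then (1 : ℝ) else 0)) / N) := by
      have := expect_none (M := N * μ) hN0 t
      simp_rw [← mul_div_assoc]
      rw [← Finset.sum_div, this]
      push_cast
      field_simp
    rw [e, ENNReal.ofReal_sum_of_nonneg
      (fun ω _ => mul_nonneg (pw_nonneg ht' ω) (by positivity))]
    refine Finset.sum_le_sum fun ω _ => ?_
    rw [ENNReal.ofReal_mul (pw_nonneg ht' ω), ENNReal.ofReal_div_of_pos hN1,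
      ENNReal.ofReal_natCast]
    gcongr
    have h := dist_sum_le x y ω
    have h2 : (2 * ∑ k, (if ω k = none then (1 : ℝ) else 0))
        = ((2 * ∑ k, (if ω k = none then 1 else 0) : ℕ) : ℝ) := by push_cast; rfl
    rw [h2, ENNReal.ofReal_natCast]
    exact_mod_cast h

end
end

section
/- For every integer μ ≥ 1 and every integer N ≥ 2, W₁(M_N, Poisson(μ)^{⊗N}) ≤ √(2μ/π)/√N ≤ √μ/√N, where W₁ is the normalized Wasserstein-1 distance on ℕ^N: there exists a pair of random vectors X ~ M_N and Y ~ Poisson(μ)^{⊗N} on a common probability space with E[(1/N)·∑_{i=1}^N |X_i − Y_i|] ≤ √(2μ/π)/√N. -/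
open MeasureTheory ENNReal

noncomputable section

/-- The multinomial distribution `M_N` on `𝒜_{N,μ}` (extended by `0` to `ℕ^N`):
`M_N(S) = ((Nμ)! / (S_1! ⋯ S_N!)) N^{-Nμ}` when `∑_i S_i = Nμ`. -/
def MNmeas (N μ : ℕ) : Measure (Fin N → ℕ) :=
  Measure.sum (fun S : Fin N → ℕ =>
    (if ∑ i, S i = N * μ then
        ENNReal.ofReal (((N * μ).factorial : ℝ) / ((∏ i, (S i).factorial : ℕ) * (N : ℝ) ^ (N * μ)))
      else 0) • Measure.dirac S)

/-- The measure on `ℕ` associated with a (sub-)probability mass function `p`. -/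
def seqMeas (p : ℕ → ℝ) : Measure ℕ :=
  Measure.sum (fun n : ℕ => ENNReal.ofReal (p n) • Measure.dirac n)

/-- The Poisson distribution with mean `μ` as a measure on `ℕ`. -/
def poissonMeas (μ : ℝ) : Measure ℕ :=
  seqMeas (fun n => μ ^ n * Real.exp (-μ) / n.factorial)


def stepE {N : ℕ} (i : Fin N) (S : Fin N → ℕ) : Fin N → ℕ := S + Pi.single i 1

/-- multinomial weights with `k` balls -/
def mw (N k : ℕ) (S : Fin N → ℕ) : ℝ≥0∞ :=
  if ∑ i, S i = k then
    ENNReal.ofReal ((k.factorial : ℝ) / ((∏ i, (S i).factorial : ℕ) * (N : ℝ) ^ k)) else 0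

def QQ (N : ℕ) : ℕ → Measure (Fin N → ℕ)
  | 0 => Measure.dirac 0
  | k + 1 => Measure.sum (fun i : Fin N => (N : ℝ≥0∞)⁻¹ • (QQ N k).map (stepE i))

def JJ (N k : ℕ) : ℕ → Measure ((Fin N → ℕ) × (Fin N → ℕ))
  | 0 => (QQ N k).map (fun x => (x, x))
  | d + 1 => Measure.sum (fun i : Fin N => (N : ℝ≥0∞)⁻¹ •
      (JJ N k d).map (fun z => (z.1, stepE i z.2)))

lemma unif_tsum (N : ℕ) (hN : 2 ≤ N) (c : ℝ≥0∞) : ∑' _ : Fin N, (N : ℝ≥0∞)⁻¹ * c = c := by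
  rw [tsum_fintype, Finset.sum_const, Finset.card_univ, Fintype.card_fin, nsmul_eq_mul, ← mul_assoc,
    ENNReal.mul_inv_cancel (by simp; omega) (by simp), one_mul]

lemma unif_sum {α : Type*} [MeasurableSpace α] (N : ℕ) (hN : 2 ≤ N) (m : Measure α) :
    Measure.sum (fun _ : Fin N => (N : ℝ≥0∞)⁻¹ • m) = m := by
  ext s hs
  rw [Measure.sum_apply _ hs]
  simp only [Measure.smul_apply, smul_eq_mul]
  exact unif_tsum N hN _

lemma QQ_univ (N : ℕ) (hN : 2 ≤ N) (k : ℕ) : QQ N k Set.univ = 1 := by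
  induction k with
  | zero => simp [QQ]
  | succ k ih =>
    rw [QQ, Measure.sum_apply _ MeasurableSet.univ]
    simp only [Measure.smul_apply, smul_eq_mul]
    have : ∀ i : Fin N, (QQ N k).map (stepE i) Set.univ = 1 := fun i => by
      rw [Measure.map_apply (measurable_of_countable _) MeasurableSet.univ]; simpa using ih
    simp only [this]
    exact unif_tsum N hN 1

lemma JJ_fst (N : ℕ) (hN : 2 ≤ N) (k d : ℕ) : (JJ N k d).map Prod.fst = QQ N k := by
  induction d with
  | zero =>
    rw [JJ, Measure.map_map measurable_fst (measurable_of_countable _)]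
    exact Measure.map_id
  | succ d ih =>
    rw [JJ, Measure.map_sum measurable_fst.aemeasurable]
    have : ∀ i : Fin N, ((N : ℝ≥0∞)⁻¹ • (JJ N k d).map (fun z => (z.1, stepE i z.2))).map Prod.fst
        = (N : ℝ≥0∞)⁻¹ • QQ N k := fun i => by
      rw [Measure.map_smul, Measure.map_map measurable_fst (measurable_of_countable _), ← ih]
      rfl
    simp only [this]
    exact unif_sum N hN _

lemma JJ_snd (N : ℕ) (k d : ℕ) : (JJ N k d).map Prod.snd = QQ N (k + d) := by
  induction d with
  | zero =>
    rw [JJ, Measure.map_map measurable_snd (measurable_of_countable _)]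
    exact Measure.map_id
  | succ d ih =>
    rw [JJ, Measure.map_sum measurable_snd.aemeasurable, ← add_assoc, QQ]
    congr 1
    funext i
    rw [Measure.map_smul, Measure.map_map measurable_snd (measurable_of_countable _), ← ih,
      Measure.map_map (measurable_of_countable _) measurable_snd]
    rfl

lemma JJ_ae (N : ℕ) (k d : ℕ) :
    ∀ᵐ z ∂(JJ N k d), (∀ i, z.1 i ≤ z.2 i) ∧ ∑ i, z.2 i = ∑ i, z.1 i + d := by
  induction d with
  | zero =>
    rw [JJ, ae_map_iff (measurable_of_countable _).aemeasurable (Set.to_countable _).measurableSet]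
    simp
  | succ d ih =>
    rw [JJ, Measure.ae_sum_iff]
    intro i
    refine Measure.ae_smul_measure ?_ _
    rw [ae_map_iff (measurable_of_countable _).aemeasurable (Set.to_countable _).measurableSet]
    filter_upwards [ih] with z hz
    constructor
    · intro j
      exact (hz.1 j).trans (by simp [stepE])
    · simp [stepE, Finset.sum_add_distrib, hz.2, add_assoc]

lemma JJ_univ (N : ℕ) (hN : 2 ≤ N) (k d : ℕ) : JJ N k d Set.univ = 1 := by
  rw [← QQ_univ N hN k, ← JJ_fst N hN k d, Measure.map_apply measurable_fst MeasurableSet.univ,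
    Set.preimage_univ]

lemma JJ_cost (N : ℕ) (hN : 2 ≤ N) (k d : ℕ) :
    ∫⁻ z, (∑ j : Fin N, (Nat.dist (z.1 j) (z.2 j) : ℝ≥0∞)) / (N : ℝ≥0∞) ∂(JJ N k d)
      = (d : ℝ≥0∞) / N := by
  have : ∫⁻ z, (∑ j : Fin N, (Nat.dist (z.1 j) (z.2 j) : ℝ≥0∞)) / (N : ℝ≥0∞) ∂(JJ N k d)
      = ∫⁻ _, (d : ℝ≥0∞) / N ∂(JJ N k d) := by
    refine lintegral_congr_ae ?_
    filter_upwards [JJ_ae N k d] with z hz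
    congr 1
    rw [← Nat.cast_sum]
    congr 1
    have h1 : ∀ j, z.1 j + Nat.dist (z.1 j) (z.2 j) = z.2 j := fun j => by
      rw [Nat.dist_eq_sub_of_le (hz.1 j)]; have := hz.1 j; omega
    have h2 : ∑ j, z.2 j = ∑ j, z.1 j + ∑ j, Nat.dist (z.1 j) (z.2 j) := by
      rw [← Finset.sum_add_distrib]; exact Finset.sum_congr rfl fun j _ => (h1 j).symm
    have := hz.2
    omega
  rw [this, lintegral_const, JJ_univ N hN, mul_one]

lemma sum_dirac_singleton {α : Type*} [MeasurableSpace α] [MeasurableSingletonClass α]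
    (w : α → ℝ≥0∞) (a : α) :
    Measure.sum (fun b => w b • Measure.dirac b) {a} = w a := by
  rw [Measure.sum_apply _ (measurableSet_singleton a), tsum_eq_single a]
  · simp
  · intro b hb
    simp [hb]

lemma mw_step (N k : ℕ) (hN : 2 ≤ N) (S : Fin N → ℕ) :
    mw N (k + 1) S = ∑ i, (N : ℝ≥0∞)⁻¹ * (if 1 ≤ S i then mw N k (S - Pi.single i 1) else 0) := by
  have hN0 : (N : ℝ) ≠ 0 := by positivity
  have key : ∀ i, 1 ≤ S i → ∑ j, (S - Pi.single i 1 : Fin N → ℕ) j + 1 = ∑ j, S j ∧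
      (∏ j, ((S - Pi.single i 1 : Fin N → ℕ) j).factorial) * S i = ∏ j, (S j).factorial := by
    intro i hi
    have hS : S = (S - Pi.single i 1) + Pi.single i 1 := by
      funext j
      by_cases h : j = i
      · subst h; simp; omega
      · simp [h]
    constructor
    · conv_rhs => rw [hS]
      simp [Finset.sum_add_distrib]
    · rw [← Finset.mul_prod_erase _ _ (Finset.mem_univ i), ← Finset.mul_prod_erase _ _ (Finset.mem_univ i)]
      have h1 : ∏ x ∈ Finset.univ.erase i, ((S - Pi.single i 1 : Fin N → ℕ) x).factorial
          = ∏ x ∈ Finset.univ.erase i, (S x).factorial := by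
        refine Finset.prod_congr rfl fun x hx => ?_
        simp [Finset.ne_of_mem_erase hx]
      rw [h1]
      simp only [Pi.sub_apply, Pi.single_eq_same]
      rw [← Nat.mul_factorial_pred (n := S i) (by omega)]
      ring
  by_cases hs : ∑ i, S i = k + 1
  · have h : ∀ i, (N : ℝ≥0∞)⁻¹ * (if 1 ≤ S i then mw N k (S - Pi.single i 1) else 0)
        = ENNReal.ofReal (S i * ((k.factorial : ℝ) / ((∏ i, (S i).factorial : ℕ) * (N : ℝ) ^ (k+1)))) := by
      intro i
      by_cases hi : 1 ≤ S i
      · obtain ⟨ha, hb⟩ := key i hi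
        rw [if_pos hi, mw, if_pos (by omega), ← ENNReal.ofReal_natCast N,
          ← ENNReal.ofReal_inv_of_pos (by positivity), ← ENNReal.ofReal_mul (by positivity), ← hb]
        congr 1
        have h0 : ((∏ j, ((S - Pi.single i 1 : Fin N → ℕ) j).factorial : ℕ) : ℝ) ≠ 0 := by
          exact_mod_cast (Finset.prod_pos fun j _ => Nat.factorial_pos _).ne'
        have h2 : (S i : ℝ) ≠ 0 := by positivity
        rw [Nat.cast_mul]
        field_simp
        ring
      · have : S i = 0 := by omega
        simp [this]
    simp only [h]
    rw [mw, if_pos hs, ← ENNReal.ofReal_sum_of_nonneg (fun i _ => by positivity), ← Finset.sum_mul,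
      ← Nat.cast_sum, hs, Nat.factorial_succ]
    congr 1
    push_cast
    ring
  · rw [mw, if_neg hs]
    symm
    refine Finset.sum_eq_zero fun i _ => ?_
    split_ifs with hi
    · rw [mw, if_neg, mul_zero]
      have := (key i hi).1
      omega
    · simp

lemma QQ_singleton (N k : ℕ) (hN : 2 ≤ N) (S : Fin N → ℕ) : QQ N k {S} = mw N k S := by
  induction k generalizing S with
  | zero =>
    rw [QQ, mw]
    by_cases h : S = 0
    · subst h; simp
    · rw [if_neg]
      · simp [Ne.symm h]
      · intro hz
        apply h
        funext i
        simpa using (Finset.sum_eq_zero_iff.1 hz) i (Finset.mem_univ i)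
  | succ k ih =>
    rw [QQ, Measure.sum_apply _ (measurableSet_singleton _), tsum_fintype, mw_step N k hN]
    refine Finset.sum_congr rfl fun i _ => ?_
    rw [Measure.smul_apply, smul_eq_mul, Measure.map_apply (measurable_of_countable _) (measurableSet_singleton _)]
    congr 1
    split_ifs with hi
    · rw [← ih]
      congr 1
      ext T
      simp only [Set.mem_preimage, Set.mem_singleton_iff, stepE]
      constructor
      · rintro rfl; simp
      · rintro rfl
        funext j
        by_cases h : j = i
        · subst h; simp; omega
        · simp [h]
    · convert measure_empty (μ := QQ N k)
      ext T
      simp only [Set.mem_preimage, Set.mem_singleton_iff, stepE, Set.mem_empty_iff_false, iff_false]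
      rintro rfl
      simp at hi

lemma MN_eq (N μ : ℕ) (hN : 2 ≤ N) : MNmeas N μ = QQ N (N * μ) := by
  refine Measure.ext_of_singleton fun S => ?_
  rw [QQ_singleton N _ hN, MNmeas, sum_dirac_singleton]
  rfl

def pp (l : ℝ) (n : ℕ) : ℝ := l ^ n * Real.exp (-l) / n.factorial

lemma pp_nonneg (l : ℝ) (hl : 0 ≤ l) (n : ℕ) : 0 ≤ pp l n := by unfold pp; positivity

lemma pp_tsum (l : ℝ) (hl : 0 ≤ l) : ∑' n, ENNReal.ofReal (pp l n) = 1 := by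
  have h : HasSum (pp l) 1 := by
    have := (NormedSpace.expSeries_div_hasSum_exp l).mul_right (Real.exp (-l))
    rw [← Real.exp_eq_exp_ℝ, ← Real.exp_add, add_neg_cancel, Real.exp_zero] at this
    have h2 : pp l = fun n : ℕ => l ^ n / (n.factorial : ℝ) * Real.exp (-l) := by
      funext n
      unfold pp; ring
    rw [h2]
    exact this
  rw [← ENNReal.ofReal_tsum_of_nonneg (pp_nonneg l hl) h.summable, h.tsum_eq, ENNReal.ofReal_one]

lemma pp_succ (l : ℝ) (n : ℕ) : (n + 1 : ℝ) * pp l (n + 1) = l * pp l n := by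
  unfold pp
  rw [Nat.factorial_succ]
  push_cast
  field_simp
  ring

lemma pp_sum_low (n M : ℕ) (h : M ≤ n + 1) :
    ∑ m ∈ Finset.range M, pp n m * (Nat.dist m n : ℝ) = M * pp n M := by
  induction M with
  | zero => simp
  | succ M ih =>
    rw [Finset.sum_range_succ, ih (by omega), Nat.dist_eq_sub_of_le (by omega : M ≤ n),
      Nat.cast_sub (by omega)]
    push_cast
    rw [pp_succ]; ring

lemma pp_sum_high (n d : ℕ) :
    ∑ m ∈ Finset.range (n + 1 + d), pp n m * (Nat.dist m n : ℝ)
      = 2 * (n * pp n n) - (n + 1 + d : ℕ) * pp n (n + 1 + d) := by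
  induction d with
  | zero =>
    rw [add_zero, pp_sum_low n _ le_rfl]
    push_cast
    rw [pp_succ]; ring
  | succ d ih =>
    rw [← add_assoc, Finset.sum_range_succ, ih, Nat.dist_eq_sub_of_le_right (by omega : n ≤ n + 1 + d),
      Nat.cast_sub (by omega)]
    have := pp_succ n (n + 1 + d)
    push_cast at this ⊢
    rw [this]; ring

lemma pp_abs (n : ℕ) (hn : 1 ≤ n) (M : ℕ) :
    ∑ m ∈ Finset.range M, pp n m * (Nat.dist m n : ℝ) ≤ Real.sqrt (2 * n / Real.pi) := by
  have hn0 : (0 : ℝ) < n := by exact_mod_cast hn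
  have h1 : ∑ m ∈ Finset.range M, pp n m * (Nat.dist m n : ℝ)
      ≤ ∑ m ∈ Finset.range (n + 1 + M), pp n m * (Nat.dist m n : ℝ) := by
    refine Finset.sum_le_sum_of_subset_of_nonneg (Finset.range_mono (by omega)) fun i _ _ => ?_
    exact mul_nonneg (pp_nonneg _ hn0.le _) (by positivity)
  refine h1.trans ?_
  rw [pp_sum_high]
  have h2 := pp_nonneg n hn0.le (n + 1 + M)
  have h3 : 0 ≤ ((n + 1 + M : ℕ) : ℝ) * pp n (n + 1 + M) := by positivity
  have h4 : 2 * (n * pp n n) ≤ Real.sqrt (2 * n / Real.pi) := by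
    have hst := Stirling.le_factorial_stirling n
    have hA : (0 : ℝ) < (n / Real.exp 1) ^ n := by positivity
    have hB : (0 : ℝ) < Real.sqrt (2 * Real.pi * n) := by positivity
    have hp : pp n n = (n / Real.exp 1) ^ n / n.factorial := by
      unfold pp
      rw [div_pow, ← Real.exp_nat_mul, mul_one, Real.exp_neg]
      field_simp
    have hp2 : pp n n ≤ 1 / Real.sqrt (2 * Real.pi * n) := by
      rw [hp, div_le_div_iff₀ (by positivity) hB]
      linarith
    calc 2 * (n * pp n n) ≤ 2 * (n * (1 / Real.sqrt (2 * Real.pi * n))) := by gcongr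
      _ = Real.sqrt (2 * n / Real.pi) := by
        symm
        rw [Real.sqrt_eq_iff_mul_self_eq (by positivity) (by positivity)]
        have := Real.mul_self_sqrt (show 0 ≤ 2 * Real.pi * n by positivity)
        field_simp
        rw [Real.sq_sqrt (by positivity)]
  linarith

lemma poisson_univ (μ : ℕ) : poissonMeas μ Set.univ = 1 := by
  rw [poissonMeas, seqMeas, Measure.sum_apply _ MeasurableSet.univ]
  simpa [pp] using pp_tsum μ (by positivity)

lemma pi_singleton_eq (N μ : ℕ) (hN : 2 ≤ N) (S : Fin N → ℕ) :
    Measure.pi (fun _ : Fin N => poissonMeas μ) {S}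
      = ENNReal.ofReal (pp (N * μ : ℕ) (∑ i, S i)) * mw N (∑ i, S i) S := by
  have : IsFiniteMeasure (poissonMeas μ) := ⟨by rw [poisson_univ]; simp⟩
  have hN0 : (N : ℝ) ≠ 0 := by positivity
  rw [Measure.pi_singleton, mw, if_pos rfl]
  have h : ∀ i, poissonMeas μ {S i} = ENNReal.ofReal (pp μ (S i)) := fun i => by
    rw [poissonMeas, seqMeas, sum_dirac_singleton]; rfl
  simp only [h]
  rw [← ENNReal.ofReal_prod_of_nonneg (fun i _ => pp_nonneg _ (by positivity) _),
    ← ENNReal.ofReal_mul (pp_nonneg _ (by positivity) _)]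
  congr 1
  unfold pp
  rw [Finset.prod_div_distrib, Finset.prod_mul_distrib, Finset.prod_pow_eq_pow_sum, Finset.prod_const,
    Finset.card_univ, Fintype.card_fin, ← Real.exp_nat_mul]
  have h0 : ((∏ j, (S j).factorial : ℕ) : ℝ) ≠ 0 := by
    exact_mod_cast (Finset.prod_pos fun j _ => Nat.factorial_pos _).ne'
  push_cast at h0 ⊢
  rw [mul_pow, mul_neg]
  field_simp

def CC (N n m : ℕ) : Measure ((Fin N → ℕ) × (Fin N → ℕ)) :=
  if n ≤ m then JJ N n (m - n) else (JJ N m (n - m)).map Prod.swap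

lemma CC_fst (N : ℕ) (hN : 2 ≤ N) (n m : ℕ) : (CC N n m).map Prod.fst = QQ N n := by
  unfold CC
  split_ifs with h
  · exact JJ_fst N hN _ _
  · rw [Measure.map_map measurable_fst measurable_swap]
    have := JJ_snd N m (n - m)
    rwa [Nat.add_sub_cancel' (by omega)] at this

lemma CC_snd (N : ℕ) (hN : 2 ≤ N) (n m : ℕ) : (CC N n m).map Prod.snd = QQ N m := by
  unfold CC
  split_ifs with h
  · have := JJ_snd N n (m - n)
    rwa [Nat.add_sub_cancel' (by omega)] at this
  · rw [Measure.map_map measurable_snd measurable_swap]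
    exact JJ_fst N hN _ _

lemma CC_cost (N : ℕ) (hN : 2 ≤ N) (n m : ℕ) :
    ∫⁻ z, (∑ j : Fin N, (Nat.dist (z.1 j) (z.2 j) : ℝ≥0∞)) / (N : ℝ≥0∞) ∂(CC N n m)
      = (Nat.dist m n : ℝ≥0∞) / N := by
  unfold CC
  split_ifs with h
  · rw [JJ_cost N hN, Nat.dist_eq_sub_of_le_right h]
  · rw [lintegral_map (measurable_of_countable _) measurable_swap,
      Nat.dist_eq_sub_of_le (by omega), ← JJ_cost N hN m (n - m)]
    simp only [Prod.fst_swap, Prod.snd_swap, Nat.dist_comm]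

def PP (N n : ℕ) : Measure ((Fin N → ℕ) × (Fin N → ℕ)) :=
  Measure.sum (fun m : ℕ => ENNReal.ofReal (pp n m) • CC N n m)

lemma PP_fst (N : ℕ) (hN : 2 ≤ N) (n : ℕ) : (PP N n).map Prod.fst = QQ N n := by
  rw [PP, Measure.map_sum measurable_fst.aemeasurable]
  simp only [Measure.map_smul, CC_fst N hN]
  ext s hs
  rw [Measure.sum_apply _ hs]
  simp only [Measure.smul_apply, smul_eq_mul]
  rw [ENNReal.tsum_mul_right, pp_tsum _ (by positivity), one_mul]

lemma PP_snd (N μ : ℕ) (hN : 2 ≤ N) :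
    (PP N (N * μ)).map Prod.snd = Measure.pi (fun _ : Fin N => poissonMeas μ) := by
  rw [PP, Measure.map_sum measurable_snd.aemeasurable]
  simp only [Measure.map_smul, CC_snd N hN]
  refine Measure.ext_of_singleton fun S => ?_
  rw [pi_singleton_eq N μ hN, Measure.sum_apply _ (measurableSet_singleton _),
    tsum_eq_single (∑ i, S i)]
  · rw [Measure.smul_apply, QQ_singleton N _ hN, smul_eq_mul]
  · intro m hm
    rw [Measure.smul_apply, QQ_singleton N _ hN, mw, if_neg hm.symm, smul_zero]

lemma PP_cost (N : ℕ) (hN : 2 ≤ N) (n : ℕ) (hn : 1 ≤ n) :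
    ∫⁻ z, (∑ j : Fin N, (Nat.dist (z.1 j) (z.2 j) : ℝ≥0∞)) / (N : ℝ≥0∞) ∂(PP N n)
      ≤ ENNReal.ofReal (Real.sqrt (2 * n / Real.pi) / N) := by
  rw [PP, lintegral_sum_measure]
  simp only [lintegral_smul_measure, CC_cost N hN, smul_eq_mul]
  refine ENNReal.tsum_le_of_sum_range_le fun M => ?_
  have hN0 : (0 : ℝ) < N := by positivity
  have h : ∀ m, ENNReal.ofReal (pp n m) * ((Nat.dist m n : ℝ≥0∞) / N)
      = ENNReal.ofReal (pp n m * (Nat.dist m n : ℝ) / N) := fun m => by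
    rw [mul_div_assoc, ENNReal.ofReal_mul (pp_nonneg _ (by positivity) _),
      ENNReal.ofReal_div_of_pos hN0, ENNReal.ofReal_natCast, ENNReal.ofReal_natCast]
  simp only [h]
  rw [← ENNReal.ofReal_sum_of_nonneg (fun m _ => by have := pp_nonneg n (by positivity) m; positivity),
    ← Finset.sum_div]
  refine ENNReal.ofReal_le_ofReal ?_
  gcongr
  exact pp_abs n hn M

/-- Chaos of the multinomial towards the Poisson product measure:
`W₁(M_N, Poisson(μ)^{⊗N}) ≤ √(2μ/π)/√N ≤ √μ/√N`. -/
theorem multinomial_chaotic (N μ : ℕ) (hN : 2 ≤ N) (hμ : 1 ≤ μ) :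
    W1 N (MNmeas N μ) (Measure.pi (fun _ : Fin N => poissonMeas μ))
        ≤ ENNReal.ofReal (Real.sqrt (2 * μ / Real.pi) / Real.sqrt N) ∧
      Real.sqrt (2 * μ / Real.pi) / Real.sqrt N ≤ Real.sqrt μ / Real.sqrt N := by
  have hN0 : (0 : ℝ) < N := by positivity
  constructor
  · refine (iInf₂_le (PP N (N * μ)) ((PP_fst N hN _).trans (MN_eq N μ hN).symm)).trans ?_
    refine (iInf_le _ (PP_snd N μ hN)).trans ?_
    refine (PP_cost N hN (N * μ) (Nat.mul_pos (by omega) hμ)).trans (le_of_eq ?_)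
    congr 1
    have : (2 * ((N * μ : ℕ) : ℝ) / Real.pi) = N * (2 * μ / Real.pi) := by push_cast; ring
    rw [this, Real.sqrt_mul hN0.le, div_eq_div_iff hN0.ne' (by positivity)]
    have := Real.mul_self_sqrt hN0.le
    linear_combination Real.sqrt (2 * μ / Real.pi) * this
  · gcongr
    rw [div_le_iff₀ Real.pi_pos]
    have h2 := Real.two_le_pi
    have : (0 : ℝ) ≤ μ := by positivity
    nlinarith

end
end
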